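/- Let L < U be reals and let g : [L,U] → ℝ be nonnegative and concave. Let c ∈ [L,U] satisfy c − L ≤ U − c. Then ∫_L^c g(x) dx ≤ 2·g(c)·(c − L). -/

import Mathlib

/-- A nonnegative concave function is at most twice its value at `c` at any point whose reflection through `c`
is again in the domain. -/
theorem ConcaveOn.le_two_mul_map_of_reflection_nonneg {s : Set ℝ} {g : ℝ → ℝ}
    (hg : ConcaveOn ℝ s g) {x c : ℝ} (hx : x ∈ s) (hy : 2 * c - x ∈ s)
    (hgy : 0 ≤ g (2 * c - x)) : g x ≤ 2 * g c := by
  have h := hg.2 hx hy (by norm_num : (0 : ℝ) ≤ 1 / 2) (by norm_num : (0 : ℝ) ≤ 1 / 2)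
    (by norm_num)
  simp only [smul_eq_mul] at h
  rw [show 1 / 2 * x + 1 / 2 * (2 * c - x) = c by ring] at h
  linarith

/-- Claim 2 core: the integral of a nonnegative concave function over the left part
`[L, c]` of the interval is at most `2 * g c * (c - L)` when `c` lies in the left half. -/
theorem stmt_2 (L U c : ℝ) (hLU : L < U) (g : ℝ → ℝ)
    (hconc : ConcaveOn ℝ (Set.Icc L U) g)
    (hnonneg : ∀ x ∈ Set.Icc L U, 0 ≤ g x)
    (hc : c ∈ Set.Icc L U) (hhalf : c - L ≤ U - c) :
    ∫ x in L..c, g x ≤ 2 * g c * (c - L) := by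
  have hbound : ∀ x ∈ Set.uIoc L c, ‖g x‖ ≤ 2 * g c := by
    intro x hx
    rw [Set.uIoc_of_le hc.1] at hx
    have hxI : x ∈ Set.Icc L U := ⟨hx.1.le, hx.2.trans hc.2⟩
    have hyI : 2 * c - x ∈ Set.Icc L U :=
      ⟨by linarith [hc.1, hx.2], by linarith [hx.1]⟩
    rw [Real.norm_of_nonneg (hnonneg x hxI)]
    exact hconc.le_two_mul_map_of_reflection_nonneg hxI hyI (hnonneg _ hyI)
  have h := intervalIntegral.norm_integral_le_of_norm_le_const hbound
  rw [abs_of_nonneg (sub_nonneg.2 hc.1)] at h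
  exact (Real.le_norm_self _).trans h
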